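/- The class of semi-linear subsets of ℤ^d is closed under union, intersection, and complement. -/

import Mathlib

/-!
Linear and semi-linear sets of `ℤ^d`, as defined by indexed families of periods and indexed unions,
coincide with Mathlib's `IsLinearSet` and `IsSemilinearSet` (translates of finitely generated
additive submonoids, and finite unions of these). Mathlib proves the Ginsburg–Spanier theorem:
in any commutative monoid semilinear sets are closed under union and intersection, and in a
finitely generated one also under complement; `ℤ^d` is finitely generated.
-/

/-- A linear subset of ℤ^d: a base vector plus ℕ-combinations of finitely many periods. -/
def LinearSet {d : ℕ} (L : Set (Fin d → ℤ)) : Prop :=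
  ∃ (v₀ : Fin d → ℤ) (k : ℕ) (v : Fin k → Fin d → ℤ),
    L = {x | ∃ c : Fin k → ℕ, x = v₀ + ∑ i, (c i : ℤ) • v i}

/-- A semi-linear set: a finite union of linear sets. -/
def SemiLinear {d : ℕ} (S : Set (Fin d → ℤ)) : Prop :=
  ∃ (m : ℕ) (Ls : Fin m → Set (Fin d → ℤ)), (∀ i, LinearSet (Ls i)) ∧ S = ⋃ i, Ls i

open scoped Pointwise in
theorem linearSet_iff_isLinearSet {d : ℕ} (L : Set (Fin d → ℤ)) :
    LinearSet L ↔ IsLinearSet L := by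
  -- The additive submonoid generated by a finite family is its set of `ℕ`-combinations.
  have key : ∀ (v₀ : Fin d → ℤ) (k : ℕ) (v : Fin k → Fin d → ℤ),
      {x | ∃ c : Fin k → ℕ, x = v₀ + ∑ i, (c i : ℤ) • v i} =
        v₀ +ᵥ (AddSubmonoid.closure (Set.range v) : Set (Fin d → ℤ)) := by
    intro v₀ k v
    ext x
    simp only [Set.mem_ofPred_eq, Set.mem_vadd_set, SetLike.mem_coe,
      AddSubmonoid.mem_closure_range_iff_of_fintype, vadd_eq_add, natCast_zsmul]
    constructor
    · rintro ⟨c, rfl⟩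
      exact ⟨_, ⟨c, rfl⟩, rfl⟩
    · rintro ⟨_, ⟨c, rfl⟩, rfl⟩
      exact ⟨c, rfl⟩
  constructor
  · rintro ⟨v₀, k, v, rfl⟩
    exact ⟨v₀, Set.range v, Set.finite_range v, key v₀ k v⟩
  · rintro ⟨v₀, t, ht, rfl⟩
    obtain ⟨k, v, -, rfl⟩ := ht.fin_param
    exact ⟨v₀, k, v, (key v₀ k v).symm⟩

theorem semiLinear_iff_isSemilinearSet {d : ℕ} (S : Set (Fin d → ℤ)) :
    SemiLinear S ↔ IsSemilinearSet S := by
  constructor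
  · rintro ⟨m, Ls, hL, rfl⟩
    exact .iUnion fun i => ((linearSet_iff_isLinearSet _).1 (hL i)).isSemilinearSet
  · rintro ⟨C, hC, hL, rfl⟩
    obtain ⟨m, Ls, -, rfl⟩ := hC.fin_param
    exact ⟨m, Ls, fun i => (linearSet_iff_isLinearSet _).2 (hL _ ⟨i, rfl⟩), Set.sUnion_range Ls⟩

/-- Semi-linear subsets of ℤ^d are closed under union, intersection
and complement. -/
theorem semilinear_closed_union_inter_compl (d : ℕ) (S T : Set (Fin d → ℤ))
    (hS : SemiLinear S) (hT : SemiLinear T) :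
    SemiLinear (S ∪ T) ∧ SemiLinear (S ∩ T) ∧ SemiLinear Sᶜ := by
  simp only [semiLinear_iff_isSemilinearSet] at *
  exact ⟨hS.union hT, hS.inter hT, hS.compl⟩
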